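/- Let H be a hypergraph on vertex set V with intersection sets I ∈ I_H (each I ⊆ V, |I| ≥ 2), and let I_E be the collection of even-order subsets (including ∅) contained in some I ∈ I_H. A function T : 2^V → ℝ satisfies, for every I ∈ I_H and every bipartition {a,b} of I, Σ_{σ : σ∩(a∪b)=a} T(σ) + Σ_{σ : σ∩(a∪b)=b} T(σ) = 0, if and only if T̂(α) = T̂(∅) for every nonempty α ∈ I_E, where T̂(α) = 2^{-n} Σ_τ T(τ)(-1)^{|α ∩ τ|}. -/

import Mathlib

open Finset

/-- Fourier coefficient `T̂(α) = 2^{-n} Σ_τ T(τ) (-1)^{|α ∩ τ|}`. -/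
noncomputable def boolFourierCoeff {V : Type*} [Fintype V] [DecidableEq V]
    (T : Finset V → ℝ) (α : Finset V) : ℝ :=
  (∑ τ : Finset V, T τ * (-1 : ℝ) ^ (α ∩ τ).card) / 2 ^ (Fintype.card V)

/-! helpers -/

theorem aux_orth {V : Type*} [Fintype V] [DecidableEq V] (I x y : Finset V) :
    ∑ α ∈ I.powerset, (-1 : ℝ) ^ (α ∩ x).card * (-1 : ℝ) ^ (α ∩ y).card
      = if y ∩ I = x ∩ I then 2 ^ I.card else 0 := by
  have key : ∀ α z : Finset V, (-1 : ℝ) ^ (α ∩ z).card = ∏ i ∈ α, (if i ∈ z then (-1 : ℝ) else 1) := by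
    intro α z
    rw [Finset.prod_ite]
    simp [Finset.filter_mem_eq_inter]
  simp_rw [key, ← Finset.prod_mul_distrib]
  rw [← Finset.prod_one_add]
  split_ifs with h
  · rw [← Finset.prod_const]
    refine Finset.prod_congr rfl fun i hi => ?_
    have := Finset.ext_iff.1 h i
    simp only [Finset.mem_inter, hi, and_true] at this
    by_cases h1 : i ∈ x <;> simp [this, h1] <;> norm_num
  · have : ∃ i ∈ I, ¬ (i ∈ y ↔ i ∈ x) := by
      by_contra hc
      push Not at hc
      apply h
      ext i
      simp only [Finset.mem_inter]
      constructor
      · rintro ⟨h1, h2⟩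
        exact ⟨(hc i h2).1 h1, h2⟩
      · rintro ⟨h1, h2⟩
        exact ⟨(hc i h2).2 h1, h2⟩
    obtain ⟨i, hi, hne⟩ := this
    apply Finset.prod_eq_zero hi
    by_cases h1 : i ∈ x <;> by_cases h2 : i ∈ y <;> simp_all

theorem aux_split {V : Type*} [Fintype V] [DecidableEq V] (α a b : Finset V)
    (hd : Disjoint a b) (h : α ⊆ a ∪ b) : (α ∩ a).card + (α ∩ b).card = α.card := by
  rw [← Finset.card_union_of_disjoint, ← Finset.inter_union_distrib_left,
    Finset.inter_eq_left.2 h]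
  exact hd.mono Finset.inter_subset_right Finset.inter_subset_right

/-- For a hypergraph with intersection sets `I ∈ I_H` (each of size ≥ 2), `T` satisfies the
bipartition cancellation conditions iff `T̂(α) = T̂(∅)` for every nonempty even-order
subset `α` of some intersection. -/
theorem stmt_16 {V : Type*} [Fintype V] [DecidableEq V]
    (IH : Finset (Finset V)) (hIH : ∀ I ∈ IH, 2 ≤ I.card) (T : Finset V → ℝ) :
    (∀ I ∈ IH, ∀ a b : Finset V, a ≠ ∅ → b ≠ ∅ → Disjoint a b → a ∪ b = I →
      (∑ σ ∈ Finset.univ.filter (fun σ : Finset V => σ ∩ (a ∪ b) = a), T σ)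
        + (∑ σ ∈ Finset.univ.filter (fun σ : Finset V => σ ∩ (a ∪ b) = b), T σ) = 0)
    ↔ (∀ α : Finset V, α ≠ ∅ → Even α.card → (∃ I ∈ IH, α ⊆ I) →
        boolFourierCoeff T α = boolFourierCoeff T ∅) := by
  constructor
  · rintro h α - hev ⟨I, hI, hαI⟩
    unfold boolFourierCoeff
    congr 1
    rw [← sub_eq_zero, ← Finset.sum_sub_distrib]
    set F : Finset V → ℝ := fun c => ∑ σ ∈ Finset.univ.filter (fun σ : Finset V => σ ∩ I = c), T σ with hF
    set g : Finset V → ℝ := fun c => (-1 : ℝ) ^ (α ∩ c).card - 1 with hg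
    have e1 : ∑ τ : Finset V, (T τ * (-1 : ℝ) ^ (α ∩ τ).card - T τ * (-1 : ℝ) ^ (∅ ∩ τ).card)
        = ∑ c ∈ I.powerset, F c * g c := by
      rw [← Finset.sum_fiberwise_of_maps_to (s := Finset.univ) (t := I.powerset)
        (g := fun σ => σ ∩ I) (by intro σ _; simp)]
      refine Finset.sum_congr rfl fun c hc => ?_
      rw [hF, Finset.sum_mul]
      refine Finset.sum_congr rfl fun σ hσ => ?_
      have hs : σ ∩ I = c := by simpa using hσ
      have : α ∩ σ = α ∩ c := by
        rw [← hs, Finset.inter_comm σ I, ← Finset.inter_assoc, Finset.inter_eq_left.2 hαI]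
      simp only [hg, this, Finset.empty_inter, Finset.card_empty, pow_zero]
      ring
    rw [e1]
    have e2 : ∑ c ∈ I.powerset, F c * g c = ∑ c ∈ I.powerset, F (I \ c) * g (I \ c) := by
      refine Finset.sum_nbij' (fun c => I \ c) (fun c => I \ c) ?_ ?_ ?_ ?_ ?_
      · intro c _; simp
      · intro c _; simp
      · intro c hc; simpa using hc
      · intro c hc; simpa using hc
      · intro c hc
        have : I \ (I \ c) = c := Finset.sdiff_sdiff_eq_self (Finset.mem_powerset.1 hc)
        simp only [this]
    have e3 : ∑ c ∈ I.powerset, F c * g c + ∑ c ∈ I.powerset, F (I \ c) * g (I \ c) = 0 := by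
      rw [← Finset.sum_add_distrib]
      refine Finset.sum_eq_zero fun c hc => ?_
      have hcI := Finset.mem_powerset.1 hc
      have hu : c ∪ (I \ c) = I := Finset.union_sdiff_of_subset hcI
      have hsp := aux_split α c (I \ c) Finset.disjoint_sdiff (by rw [hu]; exact hαI)
      have hgg : g (I \ c) = g c := by
        simp only [hg]
        congr 1
        rw [← hsp, Nat.even_add] at hev
        by_cases h1 : Even (α ∩ c).card
        · rw [h1.neg_one_pow, (hev.1 h1).neg_one_pow]
        · have h2 : ¬ Even (α ∩ (I \ c)).card := fun h2 => h1 (hev.2 h2)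
          rw [(Nat.not_even_iff_odd.1 h1).neg_one_pow, (Nat.not_even_iff_odd.1 h2).neg_one_pow]
      have hg0 : g ∅ = 0 := by simp [hg]
      rw [hgg]
      by_cases hc0 : c = ∅
      · rw [hc0, hg0]; ring
      by_cases hc1 : I \ c = ∅
      · rw [← hgg, hc1, hg0]; ring
      have := h I hI c (I \ c) hc0 hc1 Finset.disjoint_sdiff hu
      rw [hu] at this
      rw [← add_mul]
      simp only [hF]
      rw [this, zero_mul]
    linarith
  · intro h I hI a b ha hb hd hab
    set S : Finset V → ℝ := fun α => ∑ τ : Finset V, T τ * (-1 : ℝ) ^ (α ∩ τ).card with hS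
    have hSα : ∀ α ∈ I.powerset, Even α.card → S α = S ∅ := by
      intro α hα hev
      by_cases h0 : α = ∅
      · rw [h0]
      have := h α h0 hev ⟨I, hI, Finset.mem_powerset.1 hα⟩
      unfold boolFourierCoeff at this
      exact (div_left_inj' (by positivity)).1 this
    have haI : a ∩ I = a := by rw [← hab]; simp
    have hbI : b ∩ I = b := by rw [← hab]; simp
    have hinv : ∀ x : Finset V, x ∩ I = x → ∑ α ∈ I.powerset, (-1 : ℝ) ^ (α ∩ x).card * S α
        = 2 ^ I.card * ∑ σ ∈ Finset.univ.filter (fun σ : Finset V => σ ∩ I = x), T σ := by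
      intro x hx
      simp only [hS, Finset.mul_sum]
      rw [Finset.sum_comm, Finset.sum_filter]
      refine Finset.sum_congr rfl fun σ _ => ?_
      have := aux_orth I x σ
      rw [hx] at this
      calc _ = T σ * ∑ α ∈ I.powerset, (-1 : ℝ) ^ (α ∩ x).card * (-1 : ℝ) ^ (α ∩ σ).card := by
            rw [Finset.mul_sum]
            exact Finset.sum_congr rfl fun _ _ => by ring
        _ = _ := by
            rw [this]
            split_ifs <;> ring
    have hz : ∀ x : Finset V, x ∩ I = x → x ≠ ∅ →
        ∑ α ∈ I.powerset, (-1 : ℝ) ^ (α ∩ x).card = 0 := by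
      intro x hx hx0
      have := aux_orth I x ∅
      rw [hx, Finset.empty_inter, if_neg (Ne.symm hx0)] at this
      simpa using this
    have hsum : ∑ α ∈ I.powerset, (-1 : ℝ) ^ (α ∩ a).card * S α
        + ∑ α ∈ I.powerset, (-1 : ℝ) ^ (α ∩ b).card * S α = 0 := by
      have : ∑ α ∈ I.powerset, (-1 : ℝ) ^ (α ∩ a).card * S α
        + ∑ α ∈ I.powerset, (-1 : ℝ) ^ (α ∩ b).card * S α
        = (∑ α ∈ I.powerset, (-1 : ℝ) ^ (α ∩ a).card
          + ∑ α ∈ I.powerset, (-1 : ℝ) ^ (α ∩ b).card) * S ∅ := by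
        rw [← Finset.sum_add_distrib, ← Finset.sum_add_distrib, Finset.sum_mul]
        refine Finset.sum_congr rfl fun α hα => ?_
        by_cases hev : Even α.card
        · rw [hSα α hα hev]; ring
        · have hsp := aux_split α a b hd (by rw [hab]; exact Finset.mem_powerset.1 hα)
          rw [← hsp, Nat.even_add] at hev
          have : (-1 : ℝ) ^ (α ∩ a).card + (-1 : ℝ) ^ (α ∩ b).card = 0 := by
            by_cases h1 : Even (α ∩ a).card
            · have h2 : ¬ Even (α ∩ b).card := fun h2 => hev ⟨fun _ => h2, fun _ => h1⟩
              rw [h1.neg_one_pow, (Nat.not_even_iff_odd.1 h2).neg_one_pow]; ring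
            · have h2 : Even (α ∩ b).card := by
                by_contra h2
                exact hev ⟨fun h => absurd h h1, fun h => absurd h h2⟩
              rw [h2.neg_one_pow, (Nat.not_even_iff_odd.1 h1).neg_one_pow]; ring
          rw [← add_mul, this]; ring
      rw [this, hz a haI ha, hz b hbI hb]; ring
    rw [hinv a haI, hinv b hbI, ← mul_add] at hsum
    rw [hab]
    exact (mul_eq_zero.1 hsum).resolve_left (by positivity)
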